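/- Primal reformulation for ε-fairness: for a tolerance vector ε ∈ ℝ^m_+, the projection distance 𝒫_ε(P̂_N) := inf{ W_c(Q, P̂_N) : E_Q[𝒞(X) φ(U, E_Q[U])] ≤ ε componentwise } equals the optimal value of the linear program min_p (1/N) Σ_{i=1}^N p_i d(x_i) subject to p ∈ [0,1]^N and Σ_{i=1}^N (1 − 2𝒞(x_i)) φ(u_i, E_{P̂_N}[U]) p_i + Σ_{i=1}^N 𝒞(x_i) φ(u_i, E_{P̂_N}[U]) ≤ N ε componentwise, with both sides equal to +∞ when the constraint set is empty. -/

import Mathlib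

open BigOperators ENNReal MeasureTheory
open scoped Classical

noncomputable section

/-- Optimal transport cost between two measures, for a cost `c`:
`W_c(Q₁,Q₂) = inf { E_π[c(Z,Z')] : π a coupling of (Q₁,Q₂) }`. -/
def Wcost {Z : Type*} [MeasurableSpace Z] (c : Z → Z → ℝ≥0∞) (μ ν : Measure Z) : ℝ≥0∞ :=
  ⨅ π ∈ {π : Measure (Z × Z) |
      π.map Prod.fst = μ ∧ π.map Prod.snd = ν}, ∫⁻ p, c p.1 p.2 ∂π

/-- The transport cost on `𝒵 = 𝒳 × 𝒜 × 𝒴` built from a ground cost `c̄` on features: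
`c((x,a,y),(x',a',y')) = c̄(x,x') + ∞·|a−a'| + ∞·|y−y'|` (with `∞·0 = 0`). -/
def prodCost {X A : Type*} (cbar : X → X → ℝ≥0∞) :
    (X × A × Bool) → (X × A × Bool) → ℝ≥0∞ :=
  fun z z' => cbar z.1 z'.1 + (if z.2.1 = z'.2.1 then (0 : ℝ≥0∞) else ⊤) +
    (if z.2.2 = z'.2.2 then (0 : ℝ≥0∞) else ⊤)

/-- Distance to the set of features with the opposite classifier label:
`d(x) = inf { c̄(x,x') : 𝒞(x') = 1 − 𝒞(x) }`. -/
def dBoundary {X : Type*} (cbar : X → X → ℝ≥0∞) (C : X → ℝ) (x : X) : ℝ≥0∞ :=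
  ⨅ x' ∈ {x' | C x' = 1 - C x}, cbar x x'

/-- The set of distributions on `𝒵` under which the classifier `𝒞` is `ε`-fair:
`ℱ_ε = { Q : E_Q[𝒞(X) φ(U, E_Q[U])] ≤ ε componentwise }`. -/
def fairSetEps {d s m : ℕ} (𝒳 : Set (Fin d → ℝ)) (𝒜 : Type*) [MeasurableSpace 𝒜]
    (C : ↥𝒳 → ℝ) (ψ : 𝒜 × Bool → Fin s → ℝ)
    (φ : (Fin s → ℝ) → (Fin s → ℝ) → Fin m → ℝ) (ε : Fin m → ℝ) :
    Set (Measure (↥𝒳 × 𝒜 × Bool)) :=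
  {Q | IsProbabilityMeasure Q ∧
    ∀ k, (∫ z, C z.1 * φ (ψ z.2) (∫ z', ψ z'.2 ∂Q) k ∂Q) ≤ ε k}

/-- The empirical measure `P̂_N = N⁻¹ Σᵢ δ_{(xᵢ,aᵢ,yᵢ)}`. -/
def empMeasure {d : ℕ} {𝒳 : Set (Fin d → ℝ)} {𝒜 : Type*} [MeasurableSpace 𝒜]
    {N : ℕ} (x : Fin N → ↥𝒳) (a : Fin N → 𝒜) (y : Fin N → Bool) :
    Measure (↥𝒳 × 𝒜 × Bool) :=
  (N : ℝ≥0∞)⁻¹ • ∑ i, Measure.dirac (x i, a i, y i)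

lemma aux_decomp {Z : Type*} [MeasurableSpace Z] [MeasurableSingletonClass Z] {N : ℕ} (hN : 0 < N)
    (z : Fin N → Z) (π : Measure (Z × Z))
    (h : π.map Prod.snd = (N : ℝ≥0∞)⁻¹ • ∑ i, Measure.dirac (z i)) :
    ∃ ρ : Fin N → Measure (Z × Z), (∀ i, IsProbabilityMeasure (ρ i)) ∧ (∀ i, ρ i ≪ π) ∧
      (∀ i, ∀ᵐ p ∂(ρ i), p.2 = z i) ∧ π = (N : ℝ≥0∞)⁻¹ • ∑ i, ρ i := by
  have hN0 : (N : ℝ≥0∞) ≠ 0 := by simpa using hN.ne'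
  have hNi : (N : ℝ≥0∞)⁻¹ ≠ 0 := by simp
  have hBm : ∀ w : Z, MeasurableSet ((Prod.snd : Z × Z → Z) ⁻¹' {w}) :=
    fun w => measurable_snd (measurableSet_singleton w)
  have hfib : ∀ w, π (Prod.snd ⁻¹' {w}) =
      (N : ℝ≥0∞)⁻¹ * ((Finset.univ.filter (fun i => z i = w)).card : ℝ≥0∞) := by
    intro w
    rw [← Measure.map_apply measurable_snd (measurableSet_singleton w), h]
    simp [Measure.dirac_apply, Set.indicator_apply, Finset.sum_ite]
  have hcard : ∀ i, ((Finset.univ.filter (fun j => z j = z i)).card : ℝ≥0∞) ≠ 0 := by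
    intro i
    have : 0 < (Finset.univ.filter (fun j => z j = z i)).card :=
      Finset.card_pos.2 ⟨i, by simp⟩
    exact_mod_cast this.ne'
  have hpos : ∀ i, π (Prod.snd ⁻¹' {z i}) ≠ 0 := by
    intro i
    rw [hfib]
    exact mul_ne_zero hNi (hcard i)
  have huniv : π Set.univ = 1 := by
    have : π.map Prod.snd Set.univ = 1 := by
      rw [h]
      simp [ENNReal.inv_mul_cancel hN0]
    rwa [Measure.map_apply measurable_snd MeasurableSet.univ, Set.preimage_univ] at this
  haveI : IsProbabilityMeasure π := ⟨huniv⟩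
  have haes : ∀ᵐ p ∂π, p.2 ∈ Finset.univ.image z := by
    have hm : MeasurableSet ((Finset.univ.image z : Finset Z) : Set Z) :=
      Finset.measurableSet _
    have : ∀ᵐ w ∂(π.map Prod.snd), w ∈ ((Finset.univ.image z : Finset Z) : Set Z) := by
      rw [h, ae_iff]
      simp [Measure.dirac_apply, Set.indicator_apply]
    have := ae_of_ae_map measurable_snd.aemeasurable this
    simpa using this
  refine ⟨fun i => ProbabilityTheory.cond π (Prod.snd ⁻¹' {z i}), fun i =>
    ProbabilityTheory.cond_isProbabilityMeasure (hpos i), fun i =>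
    ProbabilityTheory.cond_absolutelyContinuous, fun i => ?_, ?_⟩
  · have := ProbabilityTheory.ae_cond_mem (μ := π) (hBm (z i))
    simpa using this
  · ext S hS
    have h1 : π S = ∑ w ∈ Finset.univ.image z, π (Prod.snd ⁻¹' {w} ∩ S) := by
      rw [← measure_biUnion_finset]
      · apply measure_congr
        filter_upwards [haes] with p hp
        apply propext
        change p ∈ S ↔ p ∈ (⋃ b ∈ Finset.univ.image z, Prod.snd ⁻¹' {b} ∩ S)
        simp only [Set.mem_iUnion, Set.mem_inter_iff, Set.mem_preimage, Set.mem_singleton_iff]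
        exact ⟨fun h => ⟨p.2, hp, rfl, h⟩, fun ⟨_, _, _, h⟩ => h⟩
      · intro u _ v _ huv
        refine Set.disjoint_left.2 ?_
        rintro p ⟨h1, _⟩ ⟨h2, _⟩
        exact huv (h1.symm.trans h2)
      · intro w _
        exact (hBm w).inter hS
    rw [h1, Measure.smul_apply, Measure.finsetSum_apply]
    simp only [ProbabilityTheory.cond_apply (hBm _), smul_eq_mul]
    rw [Finset.sum_comp (fun w => (π (Prod.snd ⁻¹' {w}))⁻¹ * π (Prod.snd ⁻¹' {w} ∩ S)) z,
      Finset.mul_sum]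
    refine Finset.sum_congr rfl fun w hw => ?_
    obtain ⟨i, -, rfl⟩ := Finset.mem_image.1 hw
    rw [nsmul_eq_mul, ← mul_assoc, ← mul_assoc, ← hfib,
      ENNReal.mul_inv_cancel (hpos i) (measure_ne_top _ _), one_mul]

lemma aux_key {d s m : ℕ} (𝒳 : Set (Fin d → ℝ)) (𝒜 : Type*)
    [MeasurableSpace 𝒜] [Fintype 𝒜] [MeasurableSingletonClass 𝒜]
    (C : ↥𝒳 → ℝ) (hC_bin : ∀ x, C x = 0 ∨ C x = 1) (hC_meas : Measurable C)
    (ψ : 𝒜 × Bool → Fin s → ℝ)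
    (φ : (Fin s → ℝ) → (Fin s → ℝ) → Fin m → ℝ) (ε : Fin m → ℝ)
    {N : ℕ} (hN : 0 < N)
    (x : Fin N → ↥𝒳) (a : Fin N → 𝒜) (y : Fin N → Bool)
    (ρ : Fin N → Measure ((↥𝒳 × 𝒜 × Bool) × (↥𝒳 × 𝒜 × Bool)))
    (hρ : ∀ i, IsProbabilityMeasure (ρ i))
    (hae : ∀ i, ∀ᵐ p ∂(ρ i), p.1.2 = (a i, y i)) :
    ((N : ℝ≥0∞)⁻¹ • ∑ i, ρ i).map Prod.fst ∈ fairSetEps 𝒳 𝒜 C ψ φ ε ↔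
    ∀ k, (∑ i, (1 - 2 * C (x i)) *
                φ (ψ (a i, y i)) ((N : ℝ)⁻¹ • ∑ j, ψ (a j, y j)) k *
                  (ρ i).real {p | C p.1.1 ≠ C (x i)})
             + ∑ i, C (x i) * φ (ψ (a i, y i)) ((N : ℝ)⁻¹ • ∑ j, ψ (a j, y j)) k
             ≤ N * ε k := by
  have hN0 : (N : ℝ≥0∞) ≠ 0 := by simpa using hN.ne'
  have hNr : (0:ℝ) < N := by exact_mod_cast hN
  have hprob : IsProbabilityMeasure (((N : ℝ≥0∞)⁻¹ • ∑ i, ρ i).map Prod.fst) := by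
    refine ⟨?_⟩
    rw [Measure.map_apply measurable_fst MeasurableSet.univ]
    simp [ENNReal.inv_mul_cancel hN0]
  have hψm : Measurable ψ := measurable_of_finite _
  have hψ : ∫ z', ψ z'.2 ∂(((N : ℝ≥0∞)⁻¹ • ∑ i, ρ i).map Prod.fst) =
      (N : ℝ)⁻¹ • ∑ j, ψ (a j, y j) := by
    have hm : Measurable (fun z' : ↥𝒳 × 𝒜 × Bool => ψ z'.2) := hψm.comp measurable_snd
    rw [integral_map measurable_fst.aemeasurable hm.aestronglyMeasurable, integral_smul_measure,
      integral_finsetSum_measure]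
    · simp only [ENNReal.toReal_inv, ENNReal.toReal_natCast]
      congr 1
      refine Finset.sum_congr rfl fun i _ => ?_
      have : (fun p : (↥𝒳 × 𝒜 × Bool) × (↥𝒳 × 𝒜 × Bool) => ψ p.1.2) =ᵐ[ρ i]
          fun _ => ψ (a i, y i) := by
        filter_upwards [hae i] with p hp
        rw [hp]
      rw [integral_congr_ae this]
      simp
    · intro i _
      have : (fun p : (↥𝒳 × 𝒜 × Bool) × (↥𝒳 × 𝒜 × Bool) => ψ p.1.2) =ᵐ[ρ i]
          fun _ => ψ (a i, y i) := by
        filter_upwards [hae i] with p hp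
        rw [hp]
      exact (integrable_congr this).2 (integrable_const _)
  have hCm : Measurable (fun p : (↥𝒳 × 𝒜 × Bool) × (↥𝒳 × 𝒜 × Bool) => C p.1.1) :=
    hC_meas.comp (measurable_fst.comp measurable_fst)
  have hCi : ∀ i, Integrable (fun p : (↥𝒳 × 𝒜 × Bool) × (↥𝒳 × 𝒜 × Bool) => C p.1.1) (ρ i) := by
    intro i
    refine Integrable.of_bound hCm.aestronglyMeasurable 1 (Filter.Eventually.of_forall ?_)
    intro p
    rcases hC_bin p.1.1 with h | h <;> simp [h]
  have hCint : ∀ i, ∫ p, C p.1.1 ∂(ρ i) =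
      (1 - 2 * C (x i)) * (ρ i).real {p | C p.1.1 ≠ C (x i)} + C (x i) := by
    intro i
    have hS : MeasurableSet {p : (↥𝒳 × 𝒜 × Bool) × (↥𝒳 × 𝒜 × Bool) | C p.1.1 ≠ C (x i)} :=
      (measurableSet_eq_fun hCm measurable_const).compl
    have : (fun p : (↥𝒳 × 𝒜 × Bool) × (↥𝒳 × 𝒜 × Bool) => C p.1.1) =
        fun p => (1 - 2 * C (x i)) *
          ({p : (↥𝒳 × 𝒜 × Bool) × (↥𝒳 × 𝒜 × Bool) | C p.1.1 ≠ C (x i)}.indicator 1 p)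
          + C (x i) := by
      funext p
      rcases hC_bin p.1.1 with h | h <;> rcases hC_bin (x i) with h' | h' <;>
        simp [Set.indicator_apply, h, h'] <;> norm_num
    rw [this, integral_add, integral_const_mul, integral_indicator_one hS]
    · simp
    · exact ((integrable_const (1:ℝ)).indicator hS).const_mul _
    · exact integrable_const _
  have hmain : ∀ k, (∫ z, C z.1 * φ (ψ z.2) ((N : ℝ)⁻¹ • ∑ j, ψ (a j, y j)) k
        ∂(((N : ℝ≥0∞)⁻¹ • ∑ i, ρ i).map Prod.fst)) =
      (N:ℝ)⁻¹ * ((∑ i, (1 - 2 * C (x i)) *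
                φ (ψ (a i, y i)) ((N : ℝ)⁻¹ • ∑ j, ψ (a j, y j)) k *
                  (ρ i).real {p | C p.1.1 ≠ C (x i)})
             + ∑ i, C (x i) * φ (ψ (a i, y i)) ((N : ℝ)⁻¹ • ∑ j, ψ (a j, y j)) k) := by
    intro k
    generalize (N : ℝ)⁻¹ • ∑ j, ψ (a j, y j) = u
    have hfm : Measurable (fun b : 𝒜 × Bool => φ (ψ b) u k) := measurable_of_finite _
    have hcongr : ∀ i, (fun p : (↥𝒳 × 𝒜 × Bool) × (↥𝒳 × 𝒜 × Bool) =>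
        C p.1.1 * φ (ψ p.1.2) u k) =ᵐ[ρ i] fun p => C p.1.1 * φ (ψ (a i, y i)) u k := by
      intro i
      filter_upwards [hae i] with p hp
      rw [hp]
    have hm : Measurable (fun z : ↥𝒳 × 𝒜 × Bool => C z.1 * φ (ψ z.2) u k) :=
      (hC_meas.comp measurable_fst).mul (hfm.comp measurable_snd)
    rw [integral_map measurable_fst.aemeasurable hm.aestronglyMeasurable,
      integral_smul_measure, integral_finsetSum_measure]
    · simp only [ENNReal.toReal_inv, ENNReal.toReal_natCast, smul_eq_mul]
      congr 1
      rw [← Finset.sum_add_distrib]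
      refine Finset.sum_congr rfl fun i _ => ?_
      rw [integral_congr_ae (hcongr i), integral_mul_const, hCint i]
      ring
    · intro i _
      exact (integrable_congr (hcongr i)).2 ((hCi i).mul_const _)
  unfold fairSetEps
  rw [Set.mem_setOf_eq, hψ]
  simp only [hprob, true_and]
  refine forall_congr' fun k => ?_
  rw [hmain k, inv_mul_le_iff₀ hNr]

/-- **Primal linear-programming reformulation for ε-fairness (Proposition 5).**
For a tolerance `ε ∈ ℝ^m_+`, the projection distance
`𝒫_ε(P̂_N) = inf { W_c(Q, P̂_N) : E_Q[𝒞(X) φ(U, E_Q[U])] ≤ ε }` equals the optimal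
value of the linear program
`min_p { (1/N) Σᵢ pᵢ d(xᵢ) : p ∈ [0,1]^N,
  Σᵢ (1−2𝒞(xᵢ)) φ(uᵢ, E_{P̂_N}[U]) pᵢ + Σᵢ 𝒞(xᵢ) φ(uᵢ, E_{P̂_N}[U]) ≤ N ε }`,
both sides being `+∞` when the corresponding constraint set is empty. -/
theorem eps_fairness_projection_primal_reformulation
    {d s m : ℕ} (𝒳 : Set (Fin d → ℝ)) (𝒜 : Type*)
    [MeasurableSpace 𝒜] [Fintype 𝒜] [MeasurableSingletonClass 𝒜]
    (cbar : ↥𝒳 → ↥𝒳 → ℝ≥0∞)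
    (hc_lsc : LowerSemicontinuous (fun p : ↥𝒳 × ↥𝒳 => cbar p.1 p.2))
    (hc_symm : ∀ x x', cbar x x' = cbar x' x)
    (hc_zero : ∀ x x', cbar x x' = 0 ↔ x = x')
    (C : ↥𝒳 → ℝ) (hC_bin : ∀ x, C x = 0 ∨ C x = 1) (hC_meas : Measurable C)
    (ψ : 𝒜 × Bool → Fin s → ℝ)
    (φ : (Fin s → ℝ) → (Fin s → ℝ) → Fin m → ℝ)
    (ε : Fin m → ℝ) (hε : ∀ k, 0 ≤ ε k)
    {N : ℕ} (hN : 0 < N)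
    (x : Fin N → ↥𝒳) (a : Fin N → 𝒜) (y : Fin N → Bool) :
    -- 𝒫_ε(P̂_N)
    (⨅ Q ∈ fairSetEps 𝒳 𝒜 C ψ φ ε, Wcost (prodCost cbar) Q (empMeasure x a y))
    =
    -- optimal value of the finite linear program
    ⨅ p ∈ {p : Fin N → ℝ |
        (∀ i, p i ∈ Set.Icc (0:ℝ) 1) ∧
        ∀ k, (∑ i, (1 - 2 * C (x i)) *
                φ (ψ (a i, y i)) ((N : ℝ)⁻¹ • ∑ j, ψ (a j, y j)) k * p i)
             + ∑ i, C (x i) * φ (ψ (a i, y i)) ((N : ℝ)⁻¹ • ∑ j, ψ (a j, y j)) k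
             ≤ N * ε k},
      (N : ℝ≥0∞)⁻¹ * ∑ i, ENNReal.ofReal (p i) * dBoundary cbar C (x i) := by
  have hN0 : (N : ℝ≥0∞) ≠ 0 := by simpa using hN.ne'
  apply le_antisymm
  · refine le_iInf₂ fun p hp => ?_
    obtain ⟨hp01, hpk⟩ := hp
    by_cases hdt : ∀ i, p i ≠ 0 → dBoundary cbar C (x i) ≠ ⊤
    swap
    · push Not at hdt
      obtain ⟨i, hi, hd⟩ := hdt
      have h1 : ENNReal.ofReal (p i) ≠ 0 := by
        simpa using lt_of_le_of_ne (hp01 i).1 (Ne.symm hi)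
      have : ∑ i, ENNReal.ofReal (p i) * dBoundary cbar C (x i) = ⊤ := by
        rw [ENNReal.sum_eq_top]
        exact ⟨i, Finset.mem_univ _, by rw [hd, ENNReal.mul_top h1]⟩
      rw [this, ENNReal.mul_top (by simp)]
      exact le_top
    refine ENNReal.le_of_forall_pos_le_add fun δ hδ _ => ?_
    have hex : ∀ i, ∃ x', (p i ≠ 0 → C x' = 1 - C (x i)) ∧
        ENNReal.ofReal (p i) * cbar x' (x i) ≤
          ENNReal.ofReal (p i) * dBoundary cbar C (x i) + δ := by
      intro i
      by_cases h0 : p i = 0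
      · exact ⟨x i, fun h => absurd h0 h, by simp [h0]⟩
      · have hlt : dBoundary cbar C (x i) < dBoundary cbar C (x i) + δ :=
          ENNReal.lt_add_right (hdt i h0) (by simpa using hδ.ne')
        conv_lhs at hlt => unfold dBoundary
        simp only [iInf_lt_iff] at hlt
        obtain ⟨x', hx', hlt⟩ := hlt
        refine ⟨x', fun _ => hx', ?_⟩
        rw [hc_symm]
        calc _ ≤ ENNReal.ofReal (p i) * (dBoundary cbar C (x i) + δ) := by gcongr
          _ = ENNReal.ofReal (p i) * dBoundary cbar C (x i) + ENNReal.ofReal (p i) * δ := mul_add _ _ _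
          _ ≤ ENNReal.ofReal (p i) * dBoundary cbar C (x i) + 1 * δ := by
            gcongr
            simpa using (hp01 i).2
          _ = _ := by rw [one_mul]
    choose x' hx'C hx'c using hex
    let ρ : Fin N → Measure ((↥𝒳 × 𝒜 × Bool) × (↥𝒳 × 𝒜 × Bool)) := fun i =>
      ENNReal.ofReal (1 - p i) • Measure.dirac ((x i, a i, y i), (x i, a i, y i)) +
      ENNReal.ofReal (p i) • Measure.dirac ((x' i, a i, y i), (x i, a i, y i))
    have hsum : ∀ i, ENNReal.ofReal (1 - p i) + ENNReal.ofReal (p i) = 1 := by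
      intro i
      rw [← ENNReal.ofReal_add (by linarith [(hp01 i).2]) (hp01 i).1]
      simp
    have hρ : ∀ i, IsProbabilityMeasure (ρ i) := by
      intro i
      refine ⟨?_⟩
      simp [ρ, hsum]
    have hae : ∀ i, ∀ᵐ q ∂(ρ i), q.1.2 = (a i, y i) := by
      intro i
      rw [ae_iff]
      simp [ρ, Measure.dirac_apply, Set.indicator_apply]
    have hreal : ∀ i, (ρ i).real {q | C q.1.1 ≠ C (x i)} = p i := by
      intro i
      have : (ρ i) {q | C q.1.1 ≠ C (x i)} = ENNReal.ofReal (p i) := by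
        by_cases h0 : p i = 0
        · simp [ρ, Measure.dirac_apply, Set.indicator_apply, h0]
        · have hne : C (x' i) ≠ C (x i) := by
            rw [hx'C i h0]
            rcases hC_bin (x i) with h | h <;> rw [h] <;> norm_num
          simp [ρ, Measure.dirac_apply, Set.indicator_apply, hne]
      rw [Measure.real, this, ENNReal.toReal_ofReal (hp01 i).1]
    have hfair := (aux_key 𝒳 𝒜 C hC_bin hC_meas ψ φ ε hN x a y ρ hρ hae).2 (by
      simpa only [hreal] using hpk)
    refine (iInf₂_le _ hfair).trans ?_
    have hsnd : ((N : ℝ≥0∞)⁻¹ • ∑ i, ρ i).map Prod.snd = empMeasure x a y := by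
      ext S hS
      rw [Measure.map_apply measurable_snd hS]
      simp only [empMeasure, Measure.smul_apply, Measure.finsetSum_apply, smul_eq_mul]
      congr 1
      refine Finset.sum_congr rfl fun i _ => ?_
      simp only [ρ, Measure.add_apply, Measure.smul_apply, smul_eq_mul, Measure.dirac_apply,
        Set.indicator_apply, Set.mem_preimage, Pi.one_apply]
      rw [← add_mul, hsum, one_mul]
    refine (iInf₂_le ((N : ℝ≥0∞)⁻¹ • ∑ i, ρ i) ⟨rfl, hsnd⟩).trans ?_
    · rw [lintegral_smul_measure, lintegral_finsetSum_measure, smul_eq_mul]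
      calc _ ≤ (N : ℝ≥0∞)⁻¹ * ∑ i, (ENNReal.ofReal (p i) * dBoundary cbar C (x i) + δ) := by
            gcongr with i
            refine le_trans (le_of_eq ?_) (hx'c i)
            have h00 : cbar (x i) (x i) = 0 := (hc_zero _ _).2 rfl
            simp [ρ, lintegral_add_measure, lintegral_smul_measure, prodCost, h00]
        _ = _ := by
            rw [Finset.sum_add_distrib, mul_add]
            congr 1
            simp [← mul_assoc, ENNReal.inv_mul_cancel hN0]
  · refine le_iInf₂ fun Q hQ => le_iInf₂ fun π hπ => ?_
    obtain ⟨h1, h2⟩ := hπ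
    by_cases htop : ∫⁻ q, prodCost cbar q.1 q.2 ∂π = ⊤
    · rw [htop]; exact le_top
    obtain ⟨ρ, hρ, hac, hae2, hdec⟩ := aux_decomp hN (fun i => (x i, a i, y i)) π h2
    have hae0 : ∀ᵐ q ∂π, q.1.2 = q.2.2 := by
      have hm1 : Measurable fun q : (↥𝒳 × 𝒜 × Bool) × (↥𝒳 × 𝒜 × Bool) => (q.1.2, q.2.2) := by
        fun_prop
      let f : (𝒜 × Bool) × (𝒜 × Bool) → ℝ≥0∞ := fun r => if r.1 = r.2 then 0 else ⊤
      have hf : Measurable f := measurable_of_finite _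
      have hle : ∫⁻ q, f (q.1.2, q.2.2) ∂π ≤ ∫⁻ q, prodCost cbar q.1 q.2 ∂π := by
        refine lintegral_mono fun q => ?_
        simp only [f, prodCost]
        split_ifs with h h3 h4 <;> simp_all [Prod.ext_iff]
      have := ae_lt_top (hf.comp hm1) (ne_top_of_le_ne_top htop hle)
      filter_upwards [this] with q hq
      by_contra hne
      simp [f, hne] at hq
    have hae : ∀ i, ∀ᵐ q ∂(ρ i), q.1.2 = (a i, y i) := by
      intro i
      filter_upwards [(hac i).ae_le hae0, hae2 i] with q hq hq2
      rw [hq, hq2]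
    rw [← h1, hdec] at hQ
    have hk := (aux_key 𝒳 𝒜 C hC_bin hC_meas ψ φ ε hN x a y ρ hρ hae).1 hQ
    refine (iInf₂_le (fun i => (ρ i).real {q | C q.1.1 ≠ C (x i)})
      ⟨fun i => ⟨measureReal_nonneg, measureReal_le_one⟩, hk⟩).trans ?_
    rw [hdec, lintegral_smul_measure, lintegral_finsetSum_measure, smul_eq_mul]
    gcongr with i
    have hCm : Measurable (fun p : (↥𝒳 × 𝒜 × Bool) × (↥𝒳 × 𝒜 × Bool) => C p.1.1) :=
      hC_meas.comp (measurable_fst.comp measurable_fst)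
    have hS : MeasurableSet {p : (↥𝒳 × 𝒜 × Bool) × (↥𝒳 × 𝒜 × Bool) | C p.1.1 ≠ C (x i)} :=
      (measurableSet_eq_fun hCm measurable_const).compl
    rw [ofReal_measureReal, mul_comm,
      ← lintegral_indicator_const hS]
    refine lintegral_mono_ae ?_
    filter_upwards [hae2 i] with q hq
    rw [Set.indicator_apply]
    split_ifs with hmem
    · have hc : C q.1.1 = 1 - C (x i) := by
        have hmem : C q.1.1 ≠ C (x i) := hmem
        rcases hC_bin q.1.1 with h | h <;> rcases hC_bin (x i) with h' | h' <;>
          simp_all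
      refine (iInf₂_le q.1.1 hc).trans ?_
      rw [hc_symm, prodCost, hq, add_assoc]
      exact le_self_add
    · exact zero_le
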